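/- Let ε, p ∈ (0,1] be constants and let x = (x₁, x₂, u) be a configuration with x₁ ∈ [ε·n, x₂] and u ≤ n/2, and set p_s = 1 − x₁/x₂. There exist constants c, C > 0 (depending only on ε and p) such that whenever |p − p_s| ≤ c·√(log n / n), the chain USD_p started from x satisfies Pr[T ≤ C·n·log² n] ≥ 1 − C·n^{-1}, where T = inf{t ≥ 0 : X₁(t) = n or X₂(t) = n} is the first time all agents agree on one of the two opinions. -/

import Mathlib

open MeasureTheory

/-- The one-step transition probability of the stubborn undecided-state dynamics `USD_p`
with `n` agents, from configuration `c = (x₁, x₂, u)` to configuration `d`. -/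
noncomputable def usdStep (n : ℕ) (p : ℝ) (c d : ℕ × ℕ × ℕ) : ℝ :=
  (if d = (c.1 - 1, c.2.1, c.2.2 + 1) then (1 - p) * (c.1 : ℝ) * (c.2.1 : ℝ) / (n : ℝ) ^ 2 else 0) +
  (if d = (c.1, c.2.1 - 1, c.2.2 + 1) then (c.1 : ℝ) * (c.2.1 : ℝ) / (n : ℝ) ^ 2 else 0) +
  (if d = (c.1 + 1, c.2.1, c.2.2 - 1) then (c.2.2 : ℝ) * (c.1 : ℝ) / (n : ℝ) ^ 2 else 0) +
  (if d = (c.1, c.2.1 + 1, c.2.2 - 1) then (c.2.2 : ℝ) * (c.2.1 : ℝ) / (n : ℝ) ^ 2 else 0) +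
  (if d = c then
    1 - ((2 - p) * (c.1 : ℝ) * (c.2.1 : ℝ) + (c.2.2 : ℝ) * ((c.1 : ℝ) + (c.2.1 : ℝ))) / (n : ℝ) ^ 2
  else 0)

/-- `μ` is the law of the trajectory `(X(t))_{t ≥ 0}` of `USD_p` with `n` agents started
from the configuration `x0`: it is a probability measure on paths whose finite-dimensional
cylinder probabilities are the products of the one-step transition probabilities. -/
def IsUSD (n : ℕ) (p : ℝ) (x0 : ℕ × ℕ × ℕ) (μ : Measure (ℕ → ℕ × ℕ × ℕ)) : Prop :=
  IsProbabilityMeasure μ ∧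
  ∀ (t : ℕ) (seq : ℕ → ℕ × ℕ × ℕ),
    (μ {ω | ∀ i ≤ t, ω i = seq i}).toReal =
      (if seq 0 = x0 then (1 : ℝ) else 0) *
        ∏ i ∈ Finset.range t, usdStep n p (seq i) (seq (i + 1))

/-- The weighted bias `Δ_w = x₁ - (1 - p)·x₂` of a configuration. -/
noncomputable def dw (p : ℝ) (c : ℕ × ℕ × ℕ) : ℝ := (c.1 : ℝ) - (1 - p) * (c.2.1 : ℝ)

/-!
Up to an additive constant of order `log n`, the Lyapunov function is
`A * biasPotential + E * decidedPotential + oppositionPotential + oppositionPotential ∘ swap`.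
In one step it loses on average an amount of order `1 / n` until consensus, from whatever
configuration:

* if most agents are undecided, `decidedPotential` falls;
* if undecided and decided agents are both abundant, the jumps of the weighted bias have variance of
  order one, so `biasPotential` falls: near bias `0` because it is concave in the direction of
  the fluctuations, away from `0` because undecided agents reinforce the bias;
* if undecided agents are rare, an opinion held by at least a third of the agents wears down
  everyone who does not hold it, so one of the two opposition potentials falls.

As the Lyapunov function has size `O(log n)`, normalising it to lie in `[1, O(log n)]` turns the
additive drift into a contraction by `1 - Ω(1 / (n log n))` per step, and Markov's inequality after
`C n log² n` steps leaves a failure probability of `O(1 / n)`. This needs `p < 1`; for `p = 1`, a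
small window around `p_s` contains no admissible initial configuration.
-/

section MarkovLaw

variable {S : Type*}

/-- The paths that agree with `s` up to and including time `t`. -/
def pathCylinder (t : ℕ) (s : ℕ → S) : Set (ℕ → S) := {ω | ∀ i ≤ t, ω i = s i}

lemma mem_pathCylinder_succ {t : ℕ} {s ω : ℕ → S} (hω : ω ∈ pathCylinder t s) :
    ω ∈ pathCylinder (t + 1) (Function.update s (t + 1) (ω (t + 1))) := by
  intro i hi
  obtain rfl | hne := eq_or_ne i (t + 1)
  · rw [Function.update_self]
  · rw [Function.update_of_ne hne]
    exact hω i (by lia)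

variable [DecidableEq S] [MeasurableSpace S]

/-- `μ` is the law on path space of the Markov chain with transition probabilities `P` started
at `x₀`, prescribed through its cylinder probabilities; `IsUSD n p` is definitionally the case
`P = usdStep n p`. -/
def IsMarkovLaw (P : S → S → ℝ) (x₀ : S) (μ : Measure (ℕ → S)) : Prop :=
  IsProbabilityMeasure μ ∧ ∀ (t : ℕ) (s : ℕ → S),
    (μ {ω | ∀ i ≤ t, ω i = s i}).toReal =
      (if s 0 = x₀ then (1 : ℝ) else 0) * ∏ i ∈ Finset.range t, P (s i) (s (i + 1))

namespace IsMarkovLaw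

variable {P : S → S → ℝ} {x₀ : S} {μ : Measure (ℕ → S)}

lemma measureReal_pathCylinder_succ (h : IsMarkovLaw P x₀ μ) (t : ℕ) (s : ℕ → S) (y : S) :
    μ.real (pathCylinder (t + 1) (Function.update s (t + 1) y)) =
      μ.real (pathCylinder t s) * P (s t) y := by
  have update_of_le {i : ℕ} (hi : i ≤ t) : Function.update s (t + 1) y i = s i :=
    Function.update_of_ne (by lia) _ _
  have prod_eq : ∏ i ∈ Finset.range t,
      P (Function.update s (t + 1) y i) (Function.update s (t + 1) y (i + 1)) =
        ∏ i ∈ Finset.range t, P (s i) (s (i + 1)) := by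
    refine Finset.prod_congr rfl fun i hi => ?_
    have := Finset.mem_range.mp hi
    rw [update_of_le (by lia), update_of_le (by lia)]
  refine (h.2 _ _).trans ?_
  rw [Finset.prod_range_succ, prod_eq, update_of_le t.zero_le, update_of_le le_rfl,
    Function.update_self, ← mul_assoc]
  exact congrArg (· * P (s t) y) (h.2 t s).symm

lemma measureReal_pathCylinder_succ_inter_le (h : IsMarkovLaw P x₀ μ) {t : ℕ} {s : ℕ → S} {y : S}
    {E : Set (ℕ → S)} {K : ℝ}
    (hE : P (s t) y ≠ 0 → μ.real (pathCylinder (t + 1) (Function.update s (t + 1) y) ∩ E) ≤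
      K * μ.real (pathCylinder (t + 1) (Function.update s (t + 1) y))) :
    μ.real (pathCylinder (t + 1) (Function.update s (t + 1) y) ∩ E) ≤
      K * (μ.real (pathCylinder t s) * P (s t) y) := by
  have := h.1
  rw [← h.measureReal_pathCylinder_succ]
  by_cases hy : P (s t) y = 0
  · have null := h.measureReal_pathCylinder_succ t s y
    rw [hy, mul_zero] at null
    rw [null, mul_zero]
    exact (measureReal_mono Set.inter_subset_left).trans null.le
  · exact hE hy

variable [Countable S]

lemma ae_apply_zero_eq (h : IsMarkovLaw P x₀ μ) : ∀ᵐ ω ∂μ, ω 0 = x₀ := by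
  have := h.1
  have null (y : {y // y ≠ x₀}) : μ (pathCylinder 0 fun _ => y.1) = 0 :=
    (measureReal_eq_zero_iff).mp ((h.2 0 fun _ => y).trans (by simp [y.2]))
  refine measure_mono_null (fun ω hω => ?_) (measure_iUnion_null null)
  exact Set.mem_iUnion.mpr ⟨⟨ω 0, hω⟩, by simp [pathCylinder]⟩

lemma ae_transition_ne_zero (h : IsMarkovLaw P x₀ μ) (t : ℕ) (s : ℕ → S) :
    ∀ᵐ ω ∂μ, ω ∈ pathCylinder t s → P (s t) (ω (t + 1)) ≠ 0 := by
  have := h.1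
  have null (y : {y // P (s t) y = 0}) :
      μ (pathCylinder (t + 1) (Function.update s (t + 1) y)) = 0 :=
    (measureReal_eq_zero_iff).mp (by rw [h.measureReal_pathCylinder_succ, y.2, mul_zero])
  refine measure_mono_null (fun ω hω => ?_) (measure_iUnion_null null)
  simp only [Set.mem_compl_iff, Set.mem_ofPred_eq, Classical.not_imp, not_not] at hω
  exact Set.mem_iUnion.mpr ⟨⟨_, hω.2⟩, mem_pathCylinder_succ hω.1⟩

lemma measureReal_pathCylinder_inter_le_sum (h : IsMarkovLaw P x₀ μ) {t : ℕ} {s : ℕ → S}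
    {nbrs : Finset S} (hnbrs : ∀ y, P (s t) y ≠ 0 → y ∈ nbrs) (E : Set (ℕ → S)) :
    μ.real (pathCylinder t s ∩ E) ≤
      ∑ y ∈ nbrs, μ.real (pathCylinder (t + 1) (Function.update s (t + 1) y) ∩ E) := by
  have := h.1
  have cover : (pathCylinder t s ∩ E : Set (ℕ → S)) ≤ᵐ[μ]
      ⋃ y ∈ nbrs, pathCylinder (t + 1) (Function.update s (t + 1) y) ∩ E := by
    filter_upwards [h.ae_transition_ne_zero t s] with ω hω hmem
    exact Set.mem_biUnion (hnbrs _ (hω hmem.1)) ⟨mem_pathCylinder_succ hmem.1, hmem.2⟩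
  exact (ENNReal.toReal_mono (measure_ne_top _ _) (measure_mono_ae cover)).trans
    (measureReal_biUnion_finset_le _ _)

variable {nbrs : S → Finset S} {I A : Set S} {f : S → ℝ}

lemma measureReal_pathCylinder_inter_survival_le (h : IsMarkovLaw P x₀ μ)
    (hnbrs : ∀ x y, P x y ≠ 0 → y ∈ nbrs x) (hI : ∀ x ∈ I, ∀ y, P x y ≠ 0 → y ∈ I)
    (hf : ∀ x ∈ I, 1 ≤ f x) {ρ : ℝ} (hρ : 0 ≤ ρ)
    (hdrift : ∀ x ∈ I, x ∈ A → ∑ y ∈ nbrs x, P x y * f y ≤ ρ * f x)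
    (k t : ℕ) (s : ℕ → S) (hs : s t ∈ I) :
    μ.real (pathCylinder t s ∩ {ω | ∀ i, t ≤ i → i ≤ t + k → ω i ∈ A}) ≤
      ρ ^ k * f (s t) * μ.real (pathCylinder t s) := by
  have := h.1
  have f_nonneg {x : S} (hx : x ∈ I) : 0 ≤ f x := zero_le_one.trans (hf x hx)
  induction k generalizing t s with
  | zero =>
    rw [pow_zero, one_mul]
    exact (measureReal_mono Set.inter_subset_left).trans
      (le_mul_of_one_le_left measureReal_nonneg (hf _ hs))
  | succ k ih =>
    by_cases hA : s t ∈ A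
    swap
    · have empty : pathCylinder t s ∩ {ω | ∀ i, t ≤ i → i ≤ t + (k + 1) → ω i ∈ A} = ∅ :=
        Set.eq_empty_of_forall_notMem fun ω hω =>
          hA (hω.1 t le_rfl ▸ hω.2 t le_rfl (by lia))
      rw [empty, measureReal_empty]
      have := f_nonneg hs
      positivity
    have step (y : S) : μ.real (pathCylinder (t + 1) (Function.update s (t + 1) y) ∩
          {ω | ∀ i, t ≤ i → i ≤ t + (k + 1) → ω i ∈ A}) ≤
        ρ ^ k * f y * (μ.real (pathCylinder t s) * P (s t) y) := by
      refine h.measureReal_pathCylinder_succ_inter_le fun hy => ?_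
      have bound := ih (t + 1) (Function.update s (t + 1) y) (by simpa using hI _ hs y hy)
      rw [Function.update_self] at bound
      refine (measureReal_mono (Set.inter_subset_inter_right _ ?_)).trans bound
      exact fun ω hω i hi hik => hω i (by lia) (by lia)
    calc _ ≤ ∑ y ∈ nbrs (s t), ρ ^ k * f y * (μ.real (pathCylinder t s) * P (s t) y) :=
          (h.measureReal_pathCylinder_inter_le_sum (hnbrs _) _).trans
            (Finset.sum_le_sum fun y _ => step y)
      _ = ρ ^ k * μ.real (pathCylinder t s) * ∑ y ∈ nbrs (s t), P (s t) y * f y := by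
          rw [Finset.mul_sum]
          exact Finset.sum_congr rfl fun y _ => by ring
      _ ≤ ρ ^ k * μ.real (pathCylinder t s) * (ρ * f (s t)) := by
          gcongr
          exact hdrift _ hs hA
      _ = ρ ^ (k + 1) * f (s t) * μ.real (pathCylinder t s) := by ring

lemma measureReal_survival_le (h : IsMarkovLaw P x₀ μ)
    (hnbrs : ∀ x y, P x y ≠ 0 → y ∈ nbrs x) (hI : ∀ x ∈ I, ∀ y, P x y ≠ 0 → y ∈ I)
    (hf : ∀ x ∈ I, 1 ≤ f x) {ρ : ℝ} (hρ : 0 ≤ ρ)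
    (hdrift : ∀ x ∈ I, x ∈ A → ∑ y ∈ nbrs x, P x y * f y ≤ ρ * f x) (hx₀ : x₀ ∈ I) (k : ℕ) :
    μ.real {ω | ∀ i ≤ k, ω i ∈ A} ≤ ρ ^ k * f x₀ := by
  have := h.1
  have start : ({ω | ∀ i ≤ k, ω i ∈ A} : Set (ℕ → S)) ≤ᵐ[μ]
      (pathCylinder 0 (fun _ => x₀) ∩ {ω | ∀ i, 0 ≤ i → i ≤ 0 + k → ω i ∈ A} : Set (ℕ → S)) := by
    filter_upwards [h.ae_apply_zero_eq] with ω hω hA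
    exact ⟨fun i hi => Nat.le_zero.mp hi ▸ hω, fun i _ hi => hA i (by lia)⟩
  have f_nonneg : 0 ≤ f x₀ := zero_le_one.trans (hf x₀ hx₀)
  calc μ.real {ω | ∀ i ≤ k, ω i ∈ A}
      ≤ μ.real (pathCylinder 0 (fun _ => x₀) ∩ {ω | ∀ i, 0 ≤ i → i ≤ 0 + k → ω i ∈ A}) :=
        ENNReal.toReal_mono (measure_ne_top _ _) (measure_mono_ae start)
    _ ≤ ρ ^ k * f x₀ * μ.real (pathCylinder 0 fun _ => x₀) :=
        h.measureReal_pathCylinder_inter_survival_le hnbrs hI hf hρ hdrift k 0 _ hx₀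
    _ ≤ ρ ^ k * f x₀ := mul_le_of_le_one_right (by positivity) measureReal_le_one

theorem measureReal_survival_le_exp_of_additive_drift (h : IsMarkovLaw P x₀ μ)
    (hnbrs : ∀ x y, P x y ≠ 0 → y ∈ nbrs x) (hI : ∀ x ∈ I, ∀ y, P x y ≠ 0 → y ∈ I)
    {c L : ℝ} (hc : 0 ≤ c) (hf : ∀ x ∈ I, f x ∈ Set.Icc 1 L)
    (hdrift : ∀ x ∈ I, x ∈ A → ∑ y ∈ nbrs x, P x y * f y ≤ f x - c) (hx₀ : x₀ ∈ I) (k : ℕ) :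
    μ.real {ω | ∀ i ≤ k, ω i ∈ A} ≤ L * Real.exp (-(c / L * k)) := by
  have L_pos : 0 < L := zero_lt_one.trans_le ((hf x₀ hx₀).1.trans (hf x₀ hx₀).2)
  have contraction : ∀ x ∈ I, x ∈ A →
      ∑ y ∈ nbrs x, P x y * f y ≤ Real.exp (-(c / L)) * f x := fun x hx hA => by
    obtain ⟨one_le, le_L⟩ := hf x hx
    have loss_le : c / L * f x ≤ c := by
      rw [div_mul_eq_mul_div]
      exact div_le_of_le_mul₀ L_pos.le hc (mul_le_mul_of_nonneg_left le_L hc)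
    calc ∑ y ∈ nbrs x, P x y * f y ≤ f x - c := hdrift x hx hA
      _ ≤ (-(c / L) + 1) * f x := by linarith
      _ ≤ Real.exp (-(c / L)) * f x := by
          gcongr
          exact Real.add_one_le_exp _
  calc μ.real {ω | ∀ i ≤ k, ω i ∈ A} ≤ Real.exp (-(c / L)) ^ k * f x₀ :=
        h.measureReal_survival_le hnbrs hI (fun x hx => (hf x hx).1) (Real.exp_nonneg _)
          contraction hx₀ k
    _ ≤ Real.exp (-(c / L)) ^ k * L := by
        gcongr
        exact (hf x₀ hx₀).2
    _ = L * Real.exp (-(c / L * k)) := by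
        rw [← Real.exp_nat_mul, mul_comm]
        ring_nf

theorem one_sub_le_measureReal_exit_of_additive_drift (h : IsMarkovLaw P x₀ μ)
    (hnbrs : ∀ x y, P x y ≠ 0 → y ∈ nbrs x) (hI : ∀ x ∈ I, ∀ y, P x y ≠ 0 → y ∈ I)
    {c L : ℝ} (hc : 0 ≤ c) (hf : ∀ x ∈ I, f x ∈ Set.Icc 1 L)
    (hdrift : ∀ x ∈ I, x ∈ A → ∑ y ∈ nbrs x, P x y * f y ≤ f x - c) (hx₀ : x₀ ∈ I)
    {τ : ℝ} (hτ : 0 ≤ τ) :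
    1 - L * Real.exp (-(c / L * (τ - 1))) ≤ μ.real {ω | ∃ t : ℕ, (t : ℝ) ≤ τ ∧ ω t ∉ A} := by
  have := h.1
  have L_pos : 0 < L := zero_lt_one.trans_le ((hf x₀ hx₀).1.trans (hf x₀ hx₀).2)
  have cover : (Set.univ : Set (ℕ → S)) ⊆
      {ω | ∃ t : ℕ, (t : ℝ) ≤ τ ∧ ω t ∉ A} ∪ {ω | ∀ i ≤ ⌊τ⌋₊, ω i ∈ A} := fun ω _ => by
    by_contra! hω
    simp only [Set.mem_union, Set.mem_ofPred_eq, not_or, not_exists, not_and, not_not] at hω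
    exact hω.2 fun i hi => hω.1 i ((Nat.le_floor_iff hτ).mp hi)
  have total := (measureReal_mono (μ := μ) cover).trans (measureReal_union_le _ _)
  rw [probReal_univ] at total
  have survival : μ.real {ω | ∀ i ≤ ⌊τ⌋₊, ω i ∈ A} ≤ L * Real.exp (-(c / L * (τ - 1))) := by
    refine (h.measureReal_survival_le_exp_of_additive_drift hnbrs hI hc hf hdrift hx₀ _).trans ?_
    gcongr
    exact (Nat.sub_one_lt_floor τ).le
  linarith

end IsMarkovLaw

end MarkovLaw

section SmoothAbs

lemma sub_two_mul_sq_le_log_one_add {x : ℝ} (hx : -(1 / 2) ≤ x) :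
    x - 2 * x ^ 2 ≤ Real.log (1 + x) := by
  have one_add_pos : 0 < 1 + x := by linarith
  have remainder : 1 - (1 + x)⁻¹ - (x - 2 * x ^ 2) = x ^ 2 * (1 + 2 * x) / (1 + x) := by
    field_simp
    ring
  have remainder_nonneg : 0 ≤ x ^ 2 * (1 + 2 * x) / (1 + x) :=
    div_nonneg (mul_nonneg (sq_nonneg _) (by linarith)) one_add_pos.le
  linarith [Real.one_sub_inv_le_log_of_pos one_add_pos]

/-- The smoothing `√(x² + r²)` of `|x|` at scale `r`. -/
noncomputable def smoothAbs (r x : ℝ) : ℝ := √(x ^ 2 + r ^ 2)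

variable {r : ℝ}

lemma smoothAbs_nonneg (r x : ℝ) : 0 ≤ smoothAbs r x := Real.sqrt_nonneg _

lemma smoothAbs_sq (r x : ℝ) : smoothAbs r x ^ 2 = x ^ 2 + r ^ 2 := Real.sq_sqrt (by positivity)

lemma abs_le_smoothAbs (r x : ℝ) : |x| ≤ smoothAbs r x :=
  Real.abs_le_sqrt (le_add_of_nonneg_right (sq_nonneg r))

lemma le_smoothAbs (r x : ℝ) : r ≤ smoothAbs r x :=
  Real.le_sqrt_of_sq_le (le_add_of_nonneg_left (sq_nonneg x))

lemma smoothAbs_pos (hr : 0 < r) (x : ℝ) : 0 < smoothAbs r x := hr.trans_le (le_smoothAbs r x)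

lemma smoothAbs_le_abs_add (hr : 0 ≤ r) (x : ℝ) : smoothAbs r x ≤ |x| + r := by
  refine Real.sqrt_le_iff.mpr ⟨by positivity, ?_⟩
  nlinarith [sq_abs x, mul_nonneg (abs_nonneg x) hr]

lemma abs_smoothAbs_sub_le (hr : 0 < r) (x y : ℝ) :
    |smoothAbs r x - smoothAbs r y| ≤ |x - y| := by
  have sum_pos : 0 < smoothAbs r x + smoothAbs r y :=
    add_pos (smoothAbs_pos hr x) (smoothAbs_pos hr y)
  have factored : (smoothAbs r x - smoothAbs r y) * (smoothAbs r x + smoothAbs r y) =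
      (x - y) * (x + y) := by
    linear_combination smoothAbs_sq r x - smoothAbs_sq r y
  refine le_of_mul_le_mul_right ?_ sum_pos
  calc |smoothAbs r x - smoothAbs r y| * (smoothAbs r x + smoothAbs r y)
      = |x - y| * |x + y| := by rw [← abs_mul, ← factored, abs_mul, abs_of_pos sum_pos]
    _ ≤ |x - y| * (smoothAbs r x + smoothAbs r y) := by
        gcongr
        exact (abs_add_le x y).trans (add_le_add (abs_le_smoothAbs r x) (abs_le_smoothAbs r y))

lemma add_le_smoothAbs_add_sub (hr : 0 < r) (x : ℝ) {j : ℝ} (hj : |j| ≤ r) :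
    x * j / smoothAbs r x + j ^ 2 * r ^ 2 / (16 * smoothAbs r x ^ 3) ≤
      smoothAbs r (x + j) - smoothAbs r x := by
  have g_pos := smoothAbs_pos hr x
  have g_sq := smoothAbs_sq r x
  have abs_le_g := abs_le_smoothAbs r x
  have r_le_g := le_smoothAbs r x
  have h_sq := smoothAbs_sq r (x + j)
  set g := smoothAbs r x
  obtain ⟨k, hk⟩ : ∃ k, k = x * j / g := ⟨_, rfl⟩
  obtain ⟨e, he⟩ : ∃ e, e = j ^ 2 * r ^ 2 / (16 * g ^ 3) := ⟨_, rfl⟩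
  have k_mul : k * g = x * j := by rw [hk, div_mul_cancel₀ _ g_pos.ne']
  have e_mul : 16 * e * g = j ^ 2 - k ^ 2 := by
    rw [he, hk]
    field_simp
    rw [g_sq]
    ring
  have e_nonneg : 0 ≤ e := by rw [he]; positivity
  have k_le : k ≤ g := by
    rw [hk, div_le_iff₀ g_pos]
    calc x * j ≤ |x| * |j| := (le_abs_self _).trans (abs_mul x j).le
      _ ≤ g * g := by gcongr; exact hj.trans r_le_g
  have e_le : e ≤ g := by
    have : j ^ 2 ≤ g ^ 2 := sq_le_sq.mpr ((hj.trans r_le_g).trans (le_abs_self g))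
    nlinarith [sq_nonneg k]
  have sq_le : (g + k + e) ^ 2 ≤ smoothAbs r (x + j) ^ 2 := by
    nlinarith [mul_nonneg e_nonneg (sub_nonneg.mpr k_le), mul_nonneg e_nonneg (sub_nonneg.mpr e_le),
      mul_nonneg e_nonneg g_pos.le]
  rw [← hk, ← he]
  linarith [le_of_abs_le (abs_le_of_sq_le_sq sq_le (smoothAbs_nonneg r _))]

lemma neg_log_smoothAbs_add_sub_le {K : ℝ} (hK : 1 ≤ K) (hr : 0 < r) (x : ℝ) {j : ℝ}
    (hj : |j| ≤ r) :
    -Real.log (K * r + smoothAbs r (x + j)) - -Real.log (K * r + smoothAbs r x) ≤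
      -((x * j / smoothAbs r x + j ^ 2 * r ^ 2 / (16 * smoothAbs r x ^ 3)) /
          (K * r + smoothAbs r x)) +
        2 * j ^ 2 / (K * r + smoothAbs r x) ^ 2 := by
  have r_le_Kr : r ≤ K * r := le_mul_of_one_le_left hr.le hK
  have two_r_le : 2 * r ≤ K * r + smoothAbs r x := by linarith [le_smoothAbs r x]
  have H_pos : 0 < K * r + smoothAbs r x := by linarith
  have H'_pos : 0 < K * r + smoothAbs r (x + j) := by linarith [le_smoothAbs r (x + j)]
  have first_order := add_le_smoothAbs_add_sub hr x hj
  have lipschitz := abs_smoothAbs_sub_le hr (x + j) x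
  rw [add_sub_cancel_left] at lipschitz
  obtain ⟨H, hH⟩ : ∃ H, H = K * r + smoothAbs r x := ⟨_, rfl⟩
  obtain ⟨d, hd⟩ : ∃ d, d = smoothAbs r (x + j) - smoothAbs r x := ⟨_, rfl⟩
  rw [← hH] at H_pos two_r_le ⊢
  rw [← hd] at first_order lipschitz
  have one_add_div : 1 + d / H = (K * r + smoothAbs r (x + j)) / H := by
    rw [hd, one_add_div H_pos.ne', hH]
    ring
  have div_ge : -(1 / 2) ≤ d / H := by
    rw [le_div_iff₀ H_pos]
    linarith [neg_abs_le d]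
  have log_ge := sub_two_mul_sq_le_log_one_add div_ge
  rw [one_add_div, Real.log_div H'_pos.ne' H_pos.ne'] at log_ge
  have div_mono := div_le_div_of_nonneg_right first_order H_pos.le
  have sq_mono : 2 * (d / H) ^ 2 ≤ 2 * j ^ 2 / H ^ 2 := by
    rw [div_pow, ← mul_div_assoc]
    gcongr 2 * ?_ / _
    exact sq_le_sq.mpr lipschitz
  linarith

end SmoothAbs

section Generator

variable {α β : ℝ}

/-- The generator of the two-sided undecided-state dynamics, multiplied by `n²`: an agent of
Opinion 1 (of Opinion 2) that meets the other opinion becomes undecided with probability `α`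
(with probability `β`). `USD_p` is the case `α = 1 - p`, `β = 1`. -/
def usdGenerator (α β : ℝ) (f : ℝ → ℝ → ℝ → ℝ) (a b u : ℝ) : ℝ :=
  α * (a * b) * (f (a - 1) b (u + 1) - f a b u) + β * (a * b) * (f a (b - 1) (u + 1) - f a b u) +
    u * a * (f (a + 1) b (u - 1) - f a b u) + u * b * (f a (b + 1) (u - 1) - f a b u)

lemma usdGenerator_swap (α β : ℝ) (f : ℝ → ℝ → ℝ → ℝ) (a b u : ℝ) :
    usdGenerator α β (fun a b u => f b a u) a b u = usdGenerator β α f b a u := by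
  simp only [usdGenerator]
  ring

/-- The variance rate of the weighted bias `β a - α b` under `usdGenerator α β`. -/
def biasVariance (α β a b u : ℝ) : ℝ :=
  α * β ^ 2 * (a * b) + β * α ^ 2 * (a * b) + u * a * β ^ 2 + u * b * α ^ 2

lemma biasVariance_nonneg (hα : 0 ≤ α) (hβ : 0 ≤ β) {a b u : ℝ} (ha : 0 ≤ a) (hb : 0 ≤ b)
    (hu : 0 ≤ u) : 0 ≤ biasVariance α β a b u := by
  unfold biasVariance
  positivity

lemma biasVariance_le_sq (hα : 0 ≤ α) (hα1 : α ≤ 1) (hβ : 0 ≤ β) (hβ1 : β ≤ 1) {a b u : ℝ}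
    (ha : 0 ≤ a) (hb : 0 ≤ b) (hu : 0 ≤ u) : biasVariance α β a b u ≤ (a + b + u) ^ 2 := by
  have hα2 : α ^ 2 ≤ 1 := pow_le_one₀ hα hα1
  have hβ2 : β ^ 2 ≤ 1 := pow_le_one₀ hβ hβ1
  calc biasVariance α β a b u
      ≤ 1 * 1 * (a * b) + 1 * 1 * (a * b) + u * a * 1 + u * b * 1 := by
        unfold biasVariance
        gcongr
    _ ≤ (a + b + u) ^ 2 := by
        nlinarith [sq_nonneg a, sq_nonneg b, sq_nonneg u, mul_nonneg hu ha, mul_nonneg hu hb]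

lemma sq_mul_le_biasVariance (hα : 0 ≤ α) (hα1 : α ≤ 1) (hβ : 0 ≤ β) (hβ1 : β ≤ 1) {a b u : ℝ}
    (ha : 0 ≤ a) (hb : 0 ≤ b) (hu : 0 ≤ u) :
    (α * β) ^ 2 * (u * (a + b)) ≤ biasVariance α β a b u := by
  have hα2 : α ^ 2 ≤ 1 := pow_le_one₀ hα hα1
  have hβ2 : β ^ 2 ≤ 1 := pow_le_one₀ hβ hβ1
  calc (α * β) ^ 2 * (u * (a + b)) = u * a * (α ^ 2 * β ^ 2) + u * b * (α ^ 2 * β ^ 2) := by ring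
    _ ≤ u * a * (1 * β ^ 2) + u * b * (α ^ 2 * 1) := by gcongr
    _ ≤ biasVariance α β a b u := by
        have : 0 ≤ α * β ^ 2 * (a * b) + β * α ^ 2 * (a * b) := by positivity
        unfold biasVariance
        linarith

end Generator

/-- A real number that is `0` or at least `1`: the only trace of integrality in the drift
estimates. -/
def IsCount (x : ℝ) : Prop := x = 0 ∨ 1 ≤ x

lemma IsCount.nonneg {x : ℝ} : IsCount x → 0 ≤ x := by
  rintro (rfl | hx) <;> linarith

lemma isCount_natCast (m : ℕ) : IsCount m := by
  obtain rfl | hm := Nat.eq_zero_or_pos m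
  · exact Or.inl Nat.cast_zero
  · exact Or.inr (by exact_mod_cast hm)

/-- The configurations of total mass `N` in which consensus is neither reached nor impossible:
some agent is decided, and neither opinion is held by everyone. -/
structure IsUnsettled (N a b u : ℝ) : Prop where
  isCount_fst : IsCount a
  isCount_snd : IsCount b
  isCount_undecided : IsCount u
  total : a + b + u = N
  one_le_decided : 1 ≤ a + b
  one_le_not_fst : 1 ≤ b + u
  one_le_not_snd : 1 ≤ a + u

lemma IsUnsettled.swap {N a b u : ℝ} (h : IsUnsettled N a b u) : IsUnsettled N b a u where
  isCount_fst := h.isCount_snd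
  isCount_snd := h.isCount_fst
  isCount_undecided := h.isCount_undecided
  total := by linarith [h.total]
  one_le_decided := by linarith [h.one_le_decided]
  one_le_not_fst := h.one_le_not_snd
  one_le_not_snd := h.one_le_not_fst

section BiasPotential

/-- The potential that falls as the weighted bias `β a - α b` grows. Smoothing at scale `r` and the
offset `K r` keep its second-order terms below the fluctuations of the bias when
`r² = a + b + u`. -/
noncomputable def biasPotential (α β K r a b _u : ℝ) : ℝ :=
  -Real.log (K * r + smoothAbs r (β * a - α * b))

variable {α β K r a b u : ℝ}

lemma usdGenerator_biasPotential_le (hα : 0 ≤ α) (hα1 : α ≤ 1) (hβ : 0 ≤ β) (hβ1 : β ≤ 1)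
    (hK : 1 ≤ K) (hr : 1 ≤ r) (ha : 0 ≤ a) (hb : 0 ≤ b) (hu : 0 ≤ u) :
    usdGenerator α β (biasPotential α β K r) a b u ≤
      -((u * (β * a - α * b) ^ 2 / smoothAbs r (β * a - α * b) +
          biasVariance α β a b u * r ^ 2 / (16 * smoothAbs r (β * a - α * b) ^ 3)) /
            (K * r + smoothAbs r (β * a - α * b))) +
        2 * biasVariance α β a b u / (K * r + smoothAbs r (β * a - α * b)) ^ 2 := by
  have jump {j x : ℝ} (hj : |j| ≤ 1) (hx : x = β * a - α * b + j) :=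
    hx ▸ neg_log_smoothAbs_add_sub_le hK (by linarith : 0 < r) (β * a - α * b) (hj.trans hr)
  have abs_β : |β| ≤ 1 := abs_le.mpr ⟨by linarith, hβ1⟩
  have abs_α : |α| ≤ 1 := abs_le.mpr ⟨by linarith, hα1⟩
  have lose_fst := mul_le_mul_of_nonneg_left
    (jump ((abs_neg β).trans_le abs_β) (by ring : β * (a - 1) - α * b = _))
    (by positivity : 0 ≤ α * (a * b))
  have lose_snd := mul_le_mul_of_nonneg_left
    (jump abs_α (by ring : β * a - α * (b - 1) = _)) (by positivity : 0 ≤ β * (a * b))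
  have gain_fst := mul_le_mul_of_nonneg_left
    (jump abs_β (by ring : β * (a + 1) - α * b = _)) (by positivity : 0 ≤ u * a)
  have gain_snd := mul_le_mul_of_nonneg_left
    (jump ((abs_neg α).trans_le abs_α) (by ring : β * a - α * (b + 1) = _))
    (by positivity : 0 ≤ u * b)
  refine (add_le_add (add_le_add (add_le_add lose_fst lose_snd) gain_fst) gain_snd).trans_eq ?_
  unfold biasVariance
  ring

lemma usdGenerator_biasPotential_le_noise (hα : 0 ≤ α) (hα1 : α ≤ 1) (hβ : 0 ≤ β) (hβ1 : β ≤ 1)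
    (hK : 1 ≤ K) (hr : 1 ≤ r) (ha : 0 ≤ a) (hb : 0 ≤ b) (hu : 0 ≤ u) (total : a + b + u = r ^ 2) :
    usdGenerator α β (biasPotential α β K r) a b u ≤ 2 * r ^ 2 / K ^ 2 := by
  refine (usdGenerator_biasPotential_le hα hα1 hβ hβ1 hK hr ha hb hu).trans ?_
  have variance_nonneg := biasVariance_nonneg hα hβ ha hb hu
  have variance_le := biasVariance_le_sq hα hα1 hβ hβ1 ha hb hu
  have g_nonneg := smoothAbs_nonneg r (β * a - α * b)
  rw [total] at variance_le
  refine add_le_of_nonpos_of_le (neg_nonpos.mpr (by positivity)) ?_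
  calc 2 * biasVariance α β a b u / (K * r + smoothAbs r (β * a - α * b)) ^ 2
      ≤ 2 * (r ^ 2) ^ 2 / (K * r) ^ 2 := by
        gcongr
        exact le_add_of_nonneg_right g_nonneg
    _ = 2 * r ^ 2 / K ^ 2 := by field_simp

lemma mul_smoothAbs_le_gain {γ S d : ℝ} (hr : 0 < r) (hγ : 0 ≤ γ) (hu : γ * r ^ 2 ≤ u)
    (hS : γ * r ^ 4 ≤ S) :
    γ * r ^ 2 * smoothAbs r d / 16 ≤
      u * d ^ 2 / smoothAbs r d + S * r ^ 2 / (16 * smoothAbs r d ^ 3) := by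
  have g_pos := smoothAbs_pos hr d
  have g_sq := smoothAbs_sq r d
  set g := smoothAbs r d
  have quartic : g ^ 4 ≤ 16 * d ^ 2 * g ^ 2 + r ^ 4 := by
    have : 16 * d ^ 2 * g ^ 2 + r ^ 4 - g ^ 4 = d ^ 2 * (15 * d ^ 2 + 14 * r ^ 2) := by
      rw [show g ^ 4 = (g ^ 2) ^ 2 by ring, g_sq]
      ring
    nlinarith [show 0 ≤ d ^ 2 * (15 * d ^ 2 + 14 * r ^ 2) by positivity]
  calc γ * r ^ 2 * g / 16 = γ * r ^ 2 * g ^ 4 / (16 * g ^ 3) := by field_simp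
    _ ≤ γ * r ^ 2 * (16 * d ^ 2 * g ^ 2 + r ^ 4) / (16 * g ^ 3) := by gcongr
    _ = γ * r ^ 2 * d ^ 2 / g + γ * r ^ 4 * r ^ 2 / (16 * g ^ 3) := by field_simp
    _ ≤ u * d ^ 2 / g + S * r ^ 2 / (16 * g ^ 3) := by gcongr

lemma usdGenerator_biasPotential_le_neg (hα : 0 ≤ α) (hα1 : α ≤ 1) (hβ : 0 ≤ β) (hβ1 : β ≤ 1)
    (hK : 1 ≤ K) (hr : 1 ≤ r) (ha : 0 ≤ a) (hb : 0 ≤ b) (total : a + b + u = r ^ 2)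
    {γ : ℝ} (hγ : 0 ≤ γ) (hKγ : 64 ≤ K * γ) (hu : γ * r ^ 2 ≤ u)
    (variance_ge : γ * r ^ 4 ≤ biasVariance α β a b u) :
    usdGenerator α β (biasPotential α β K r) a b u ≤ -(γ / (32 * (K + 1)) * r ^ 2) := by
  have r_pos : 0 < r := by linarith
  have u_nonneg : 0 ≤ u := le_trans (by positivity) hu
  have gain := mul_smoothAbs_le_gain (d := β * a - α * b) r_pos hγ hu variance_ge
  have variance_le := biasVariance_le_sq hα hα1 hβ hβ1 ha hb u_nonneg
  have generator_le := usdGenerator_biasPotential_le hα hα1 hβ hβ1 hK hr ha hb u_nonneg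
  have g_pos := smoothAbs_pos r_pos (β * a - α * b)
  have r_le_g := le_smoothAbs r (β * a - α * b)
  rw [total] at variance_le
  set g := smoothAbs r (β * a - α * b)
  set S := biasVariance α β a b u
  set X := u * (β * a - α * b) ^ 2 / g + S * r ^ 2 / (16 * g ^ 3)
  have noise : 2 * S / (K * r + g) ≤ γ * r ^ 2 * g / 32 := by
    calc 2 * S / (K * r + g) ≤ 2 * (r ^ 2) ^ 2 / (K * r) := by
          gcongr
          exact le_add_of_nonneg_right g_pos.le
      _ = 64 * (r ^ 2 * r) / (32 * K) := by field_simp; norm_num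
      _ ≤ K * γ * (r ^ 2 * g) / (32 * K) := by gcongr
      _ = γ * r ^ 2 * g / 32 := by field_simp
  calc usdGenerator α β (biasPotential α β K r) a b u
      ≤ -(X / (K * r + g)) + 2 * S / (K * r + g) ^ 2 := generator_le
    _ = -((X - 2 * S / (K * r + g)) / (K * r + g)) := by
        have : K * r + g ≠ 0 := by positivity
        field_simp
        ring
    _ ≤ -(γ * r ^ 2 * g / 32 / (K * g + g)) := by
        have net_gain : γ * r ^ 2 * g / 32 ≤ X - 2 * S / (K * r + g) := by linarith
        have : 0 ≤ γ * r ^ 2 * g / 32 := by positivity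
        gcongr
        exact this.trans net_gain
    _ = -(γ / (32 * (K + 1)) * r ^ 2) := by
        rw [← add_one_mul]
        field_simp

end BiasPotential

section DecidedPotential

/-- The potential that is large when few agents are decided. -/
noncomputable def decidedPotential (a b _u : ℝ) : ℝ := -Real.log (a + b)

variable {α β a b u : ℝ}

lemma mul_log_sub_log_sub_one_le (ha : IsCount a) (hb : IsCount b) :
    a * b * (Real.log (a + b) - Real.log (a + b - 1)) ≤ (a + b) / 2 := by
  obtain rfl | ha := ha
  · simp only [zero_mul]
    linarith [hb.nonneg]
  obtain rfl | hb := hb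
  · simp only [mul_zero, zero_mul]
    linarith
  have log_le : Real.log (a + b) - Real.log (a + b - 1) ≤ 2 / (a + b) := by
    rw [← Real.log_div (by linarith) (by linarith)]
    refine (Real.log_le_sub_one_of_pos (div_pos (by linarith) (by linarith))).trans ?_
    rw [div_sub_one (by linarith), div_le_div_iff₀ (by linarith) (by linarith)]
    linarith
  calc a * b * (Real.log (a + b) - Real.log (a + b - 1)) ≤ a * b * (2 / (a + b)) := by gcongr
    _ ≤ (a + b) / 2 := by
        rw [← mul_div_assoc, div_le_div_iff₀ (by linarith) two_pos]
        nlinarith [sq_nonneg (a - b)]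

lemma half_le_mul_log_add_one_sub_log {m : ℝ} (hm : 1 ≤ m) :
    1 / 2 ≤ m * (Real.log (m + 1) - Real.log m) := by
  rw [← Real.log_div (by linarith) (by linarith)]
  calc (1 : ℝ) / 2 ≤ m * (1 - ((m + 1) / m)⁻¹) := by
        rw [inv_div, one_sub_div (by linarith), ← mul_div_assoc,
          div_le_div_iff₀ two_pos (by linarith)]
        linarith
    _ ≤ m * Real.log ((m + 1) / m) := by
        gcongr
        exact Real.one_sub_inv_le_log_of_pos (div_pos (by linarith) (by linarith))

lemma usdGenerator_decidedPotential_le (hα : 0 ≤ α) (hα1 : α ≤ 1) (hβ : 0 ≤ β) (hβ1 : β ≤ 1)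
    (ha : IsCount a) (hb : IsCount b) (hu : 0 ≤ u) (hab : 1 ≤ a + b) :
    usdGenerator α β decidedPotential a b u ≤ (a + b) - u / 2 := by
  have loss := mul_log_sub_log_sub_one_le ha hb
  have gain := mul_le_mul_of_nonneg_left (half_le_mul_log_add_one_sub_log hab) hu
  have rate : (α + β) * ((a + b) / 2) ≤ 2 * ((a + b) / 2) := by gcongr; linarith
  have expand : usdGenerator α β decidedPotential a b u =
      (α + β) * (a * b * (Real.log (a + b) - Real.log (a + b - 1))) -
        u * ((a + b) * (Real.log (a + b + 1) - Real.log (a + b))) := by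
    rw [usdGenerator]
    simp only [decidedPotential, show a - 1 + b = a + b - 1 by ring,
      show a + (b - 1) = a + b - 1 by ring, show a + 1 + b = a + b + 1 by ring,
      show a + (b + 1) = a + b + 1 by ring]
    ring
  linarith [mul_le_mul_of_nonneg_left loss (add_nonneg hα hβ)]

end DecidedPotential

section OppositionPotential

/-- The potential that measures the distance to consensus on Opinion 1; undecided agents count
less than opponents. -/
noncomputable def oppositionPotential (κ _a b u : ℝ) : ℝ := Real.log (1 + u + κ * b)

variable {α β κ a b u : ℝ}

lemma mul_log_sub_log_le {c x y : ℝ} (hc : 0 ≤ c) (hx : 0 < x) (hy : c ≠ 0 → 0 < y) :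
    c * (Real.log y - Real.log x) ≤ c * (y - x) / x := by
  obtain rfl | hc0 := eq_or_ne c 0
  · simp only [zero_mul, zero_div, le_refl]
  rw [← Real.log_div (hy hc0).ne' hx.ne', mul_div_assoc, sub_div, div_self hx.ne']
  exact mul_le_mul_of_nonneg_left (Real.log_le_sub_one_of_pos (div_pos (hy hc0) hx)) hc

lemma usdGenerator_oppositionPotential_le (hα : 0 ≤ α) (hβ : 0 ≤ β) (hκ : 0 < κ)
    (hαβ : 1 + α + β ≤ β * κ) (ha : 0 ≤ a) (hb : IsCount b) (hu : 0 ≤ u) :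
    usdGenerator α β (oppositionPotential κ) a b u ≤
      (κ * u * b - a * b - u * (a + b)) / (1 + u + κ * b) := by
  have b_nonneg := hb.nonneg
  have h_pos : 0 < 1 + u + κ * b := by positivity
  have lose_fst := mul_log_sub_log_le (y := 1 + (u + 1) + κ * b)
    (by positivity : 0 ≤ α * (a * b)) h_pos fun _ => by positivity
  have lose_snd := mul_log_sub_log_le (y := 1 + (u + 1) + κ * (b - 1))
    (by positivity : 0 ≤ β * (a * b)) h_pos fun rate_ne => by
      have b_ge : 1 ≤ b := hb.resolve_left fun b_eq => rate_ne (by rw [b_eq]; ring)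
      have := sub_nonneg.mpr b_ge
      positivity
  have gain_fst := mul_log_sub_log_le (y := 1 + (u - 1) + κ * b)
    (by positivity : 0 ≤ u * a) h_pos fun rate_ne => by
      have := hu.lt_of_ne' (left_ne_zero_of_mul rate_ne)
      have : 0 ≤ κ * b := by positivity
      linarith
  have gain_snd := mul_log_sub_log_le (y := 1 + (u - 1) + κ * (b + 1))
    (by positivity : 0 ≤ u * b) h_pos fun _ => by
      have : 0 ≤ κ * b := by positivity
      linarith
  refine (add_le_add (add_le_add (add_le_add lose_fst lose_snd) gain_fst) gain_snd).trans ?_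
  rw [← add_div, ← add_div, ← add_div]
  gcongr
  linarith [mul_le_mul_of_nonneg_right hαβ (mul_nonneg ha b_nonneg)]

lemma usdGenerator_oppositionPotential_le_undecided (hα : 0 ≤ α) (hβ : 0 ≤ β) (hκ : 0 < κ)
    (hαβ : 1 + α + β ≤ β * κ) (ha : 0 ≤ a) (hb : IsCount b) (hu : 0 ≤ u) :
    usdGenerator α β (oppositionPotential κ) a b u ≤ u := by
  have b_nonneg := hb.nonneg
  refine (usdGenerator_oppositionPotential_le hα hβ hκ hαβ ha hb hu).trans ?_
  rw [div_le_iff₀ (by positivity)]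
  linarith [mul_nonneg ha b_nonneg, mul_nonneg hu ha, mul_nonneg hu b_nonneg, mul_nonneg hu hu]

lemma usdGenerator_oppositionPotential_le_opposition (hα : 0 ≤ α) (hβ : 0 ≤ β) (hκ : 0 < κ)
    (hαβ : 1 + α + β ≤ β * κ) (ha : 0 ≤ a) (hb : IsCount b) (hu : 0 ≤ u) :
    usdGenerator α β (oppositionPotential κ) a b u ≤ κ * b := by
  have b_nonneg := hb.nonneg
  refine (usdGenerator_oppositionPotential_le hα hβ hκ hαβ ha hb hu).trans ?_
  rw [div_le_iff₀ (by positivity)]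
  linarith [mul_nonneg ha b_nonneg, mul_nonneg hu ha, mul_nonneg hu b_nonneg,
    mul_nonneg hκ.le b_nonneg, mul_nonneg (mul_nonneg hκ.le b_nonneg) (mul_nonneg hκ.le b_nonneg)]

lemma usdGenerator_oppositionPotential_le_sub (hα : 0 ≤ α) (hβ : 0 ≤ β) (hκ : 1 ≤ κ)
    (hαβ : 1 + α + β ≤ β * κ) (ha : 0 ≤ a) (hb : IsCount b) (hu : 0 ≤ u) (hbu : 1 ≤ b + u) :
    usdGenerator α β (oppositionPotential κ) a b u ≤ u - a / (1 + κ) := by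
  have b_nonneg := hb.nonneg
  have h_pos : 0 < 1 + u + κ * b := by positivity
  have h_le : 1 + u + κ * b ≤ (1 + κ) * (b + u) := by nlinarith
  have loss : a / (1 + κ) * (1 + u + κ * b) ≤ a * (b + u) := by
    calc a / (1 + κ) * (1 + u + κ * b) ≤ a / (1 + κ) * ((1 + κ) * (b + u)) := by gcongr
      _ = a * (b + u) := by field_simp
  refine (usdGenerator_oppositionPotential_le hα hβ (by linarith) hαβ ha hb hu).trans ?_
  rw [div_le_iff₀ h_pos]
  linarith [mul_nonneg hu hu, mul_nonneg hu b_nonneg]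

end OppositionPotential

section Lyapunov

/-- Coefficients for which the weighted sum of the four potentials drifts down at rate
`decided / 8` (times the number of agents) in every unsettled configuration. The configurations
with at least an `η` fraction of undecided and of decided agents rely on the bias potential; the
other inequalities keep what it costs elsewhere below the gain from the remaining potentials. -/
structure PotentialWeights (α β : ℝ) where
  /-- the weight of `biasPotential` -/
  bias : ℝ
  /-- the weight of `decidedPotential` -/
  decided : ℝ
  /-- the offset in `biasPotential` -/
  K : ℝ
  /-- the weight of opponents in `oppositionPotential` -/
  κ : ℝ
  /-- the fraction above which a kind of agent counts as abundant -/
  η : ℝ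
  fst_mem : α ∈ Set.Ioc 0 1
  snd_mem : β ∈ Set.Ioc 0 1
  bias_pos : 0 < bias
  decided_pos : 0 < decided
  one_le_K : 1 ≤ K
  one_le_κ : 1 ≤ κ
  three_le_fst : 3 ≤ α * κ
  three_le_snd : 3 ≤ β * κ
  η_pos : 0 < η
  decided_le : 12 * (1 + κ) * decided ≤ 1
  κ_mul_η_le : 16 * (κ * η) ≤ decided
  le_K_mul : 64 ≤ K * (α * β * η) ^ 2
  bias_noise_le : 32 * bias ≤ decided * K ^ 2
  le_bias_gain : 4 ≤ bias * ((α * β * η) ^ 2 / (32 * (K + 1)))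

variable {α β : ℝ}

lemma exists_opposition_weight (hα : 0 < α) (hα1 : α ≤ 1) (hβ : 0 < β) (hβ1 : β ≤ 1) :
    ∃ κ, 1 ≤ κ ∧ 3 ≤ α * κ ∧ 3 ≤ β * κ := by
  have αβ_le : α * β ≤ 1 := mul_le_one₀ hα1 hβ.le hβ1
  refine ⟨3 / (α * β), ?_, ?_, ?_⟩
  · rw [le_div_iff₀ (mul_pos hα hβ)]
    linarith
  · rw [← mul_div_assoc, mul_div_mul_left _ _ hα.ne', le_div_iff₀ hβ]
    linarith
  · rw [mul_comm α, ← mul_div_assoc, mul_div_mul_left _ _ hβ.ne', le_div_iff₀ hα]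
    linarith

lemma exists_bias_weight {γ E : ℝ} (hγ : 0 < γ) (hγ1 : γ ≤ 1) (hE : 0 < E) (hE1 : E ≤ 1) :
    ∃ A K, 0 < A ∧ 1 ≤ K ∧ 64 ≤ K * γ ∧ 32 * A ≤ E * K ^ 2 ∧ 4 ≤ A * (γ / (32 * (K + 1))) := by
  obtain ⟨K, hK⟩ : ∃ K, K = 8192 / (γ * E) := ⟨_, rfl⟩
  have K_mul : K * (γ * E) = 8192 := by rw [hK]; field_simp
  have le_K : 8192 ≤ K := by
    rw [hK, le_div_iff₀ (by positivity)]
    linarith [mul_le_one₀ hγ1 hE.le hE1]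
  refine ⟨128 * (K + 1) / γ, K, by positivity, by linarith, ?_, ?_, ?_⟩
  · calc (64 : ℝ) ≤ K * (γ * E) := by linarith
      _ ≤ K * (γ * 1) := by gcongr
      _ = K * γ := by rw [mul_one]
  · rw [← mul_div_assoc, div_le_iff₀ hγ]
    linarith [congrArg (K * ·) K_mul]
  · field_simp
    norm_num

lemma nonempty_potentialWeights (hα : 0 < α) (hα1 : α ≤ 1) (hβ : 0 < β) (hβ1 : β ≤ 1) :
    Nonempty (PotentialWeights α β) := by
  obtain ⟨κ, one_le_κ, three_le_fst, three_le_snd⟩ := exists_opposition_weight hα hα1 hβ hβ1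
  obtain ⟨E, hE⟩ : ∃ E, E = 1 / (12 * (1 + κ)) := ⟨_, rfl⟩
  have E_pos : 0 < E := by rw [hE]; positivity
  have E_le : E ≤ 1 := by
    rw [hE, div_le_one (by positivity)]
    linarith
  obtain ⟨η, hη⟩ : ∃ η, η = E / (16 * κ) := ⟨_, rfl⟩
  have η_pos : 0 < η := by rw [hη]; positivity
  have η_le : η ≤ 1 := by
    rw [hη, div_le_one (by positivity)]
    linarith
  have γ_le : (α * β * η) ^ 2 ≤ 1 :=
    pow_le_one₀ (by positivity) (mul_le_one₀ (mul_le_one₀ hα1 hβ.le hβ1) η_pos.le η_le)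
  obtain ⟨A, K, bias_pos, one_le_K, le_K_mul, bias_noise_le, le_bias_gain⟩ :=
    exists_bias_weight (by positivity) γ_le E_pos E_le
  have decided_le : 12 * (1 + κ) * E ≤ 1 := by rw [hE]; field_simp; rfl
  have κ_mul_η_le : 16 * (κ * η) ≤ E := by rw [hη]; field_simp; rfl
  exact ⟨{
    bias := A
    decided := E
    K := K
    κ := κ
    η := η
    fst_mem := ⟨hα, hα1⟩
    snd_mem := ⟨hβ, hβ1⟩
    decided_pos := E_pos
    bias_pos, one_le_K, one_le_κ, three_le_fst, three_le_snd, η_pos, decided_le, κ_mul_η_le,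
    le_K_mul, bias_noise_le, le_bias_gain }⟩

namespace PotentialWeights

/-- The Lyapunov function, up to an additive constant. -/
noncomputable def potential (W : PotentialWeights α β) (r a b u : ℝ) : ℝ :=
  W.bias * biasPotential α β W.K r a b u + W.decided * decidedPotential a b u +
    oppositionPotential W.κ a b u + oppositionPotential W.κ b a u

lemma usdGenerator_potential (W : PotentialWeights α β) (r a b u : ℝ) :
    usdGenerator α β (W.potential r) a b u =
      W.bias * usdGenerator α β (biasPotential α β W.K r) a b u +
        W.decided * usdGenerator α β decidedPotential a b u +
        usdGenerator α β (oppositionPotential W.κ) a b u +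
        usdGenerator β α (oppositionPotential W.κ) b a u := by
  rw [← usdGenerator_swap]
  simp only [usdGenerator, potential]
  ring

/-- Exchanging the two opinions. -/
def swap (W : PotentialWeights α β) : PotentialWeights β α where
  __ := W
  fst_mem := W.snd_mem
  snd_mem := W.fst_mem
  three_le_fst := W.three_le_snd
  three_le_snd := W.three_le_fst
  le_K_mul := mul_comm α β ▸ W.le_K_mul
  le_bias_gain := mul_comm α β ▸ W.le_bias_gain

lemma η_le (W : PotentialWeights α β) : 192 * (1 + W.κ) * W.η ≤ 1 := by
  have η_le_κ_mul : W.η ≤ W.κ * W.η := le_mul_of_one_le_left W.η_pos.le W.one_le_κ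
  have one_add_κ_pos : 0 < 1 + W.κ := by linarith [W.one_le_κ]
  calc 192 * (1 + W.κ) * W.η = 12 * (1 + W.κ) * (16 * W.η) := by ring
    _ ≤ 12 * (1 + W.κ) * W.decided := by gcongr; linarith [W.κ_mul_η_le]
    _ ≤ 1 := W.decided_le

variable {N r a b u : ℝ}

lemma mul_usdGenerator_bias_le (W : PotentialWeights α β) (hr : 1 ≤ r)
    (h : IsUnsettled (r ^ 2) a b u) :
    W.bias * usdGenerator α β (biasPotential α β W.K r) a b u ≤ W.decided * r ^ 2 / 16 := by
  have K_pos : 0 < W.K := by linarith [W.one_le_K]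
  calc W.bias * usdGenerator α β (biasPotential α β W.K r) a b u
      ≤ W.bias * (2 * r ^ 2 / W.K ^ 2) :=
        mul_le_mul_of_nonneg_left (usdGenerator_biasPotential_le_noise W.fst_mem.1.le W.fst_mem.2
          W.snd_mem.1.le W.snd_mem.2 W.one_le_K hr h.isCount_fst.nonneg h.isCount_snd.nonneg
          h.isCount_undecided.nonneg h.total) W.bias_pos.le
    _ = 32 * W.bias * (r ^ 2 / (16 * W.K ^ 2)) := by field_simp; ring
    _ ≤ W.decided * W.K ^ 2 * (r ^ 2 / (16 * W.K ^ 2)) :=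
        mul_le_mul_of_nonneg_right W.bias_noise_le (by positivity)
    _ = W.decided * r ^ 2 / 16 := by field_simp

lemma mul_usdGenerator_bias_le_neg (W : PotentialWeights α β) (hr : 1 ≤ r)
    (h : IsUnsettled (r ^ 2) a b u) (hu : W.η * r ^ 2 ≤ u) (hab : W.η * r ^ 2 ≤ a + b) :
    W.bias * usdGenerator α β (biasPotential α β W.K r) a b u ≤ -(4 * r ^ 2) := by
  obtain ⟨⟨hα, hα1⟩, hβ, hβ1⟩ := And.intro W.fst_mem W.snd_mem
  have ha := h.isCount_fst.nonneg
  have hb := h.isCount_snd.nonneg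
  have hu_nonneg := h.isCount_undecided.nonneg
  have αβ_le : α * β ≤ 1 := mul_le_one₀ hα1 hβ.le hβ1
  have η_pos := W.η_pos
  have η_le_one : W.η ≤ 1 := by nlinarith [W.η_le, W.one_le_κ]
  have γ_le : (α * β * W.η) ^ 2 ≤ W.η := by
    calc (α * β * W.η) ^ 2 ≤ (1 * W.η) ^ 2 := by gcongr
      _ ≤ W.η := by nlinarith
  have variance_ge : (α * β * W.η) ^ 2 * r ^ 4 ≤ biasVariance α β a b u := by
    calc (α * β * W.η) ^ 2 * r ^ 4 = (α * β) ^ 2 * (W.η * r ^ 2 * (W.η * r ^ 2)) := by ring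
      _ ≤ (α * β) ^ 2 * (u * (a + b)) := by gcongr
      _ ≤ biasVariance α β a b u := sq_mul_le_biasVariance hα.le hα1 hβ.le hβ1 ha hb hu_nonneg
  have drift := mul_le_mul_of_nonneg_left (usdGenerator_biasPotential_le_neg hα.le hα1 hβ.le hβ1
    W.one_le_K hr ha hb h.total (sq_nonneg _) W.le_K_mul
    ((mul_le_mul_of_nonneg_right γ_le (sq_nonneg r)).trans hu) variance_ge) W.bias_pos.le
  linarith [mul_le_mul_of_nonneg_right W.le_bias_gain (sq_nonneg r)]

lemma mul_usdGenerator_decided_le (W : PotentialWeights α β) (h : IsUnsettled N a b u) :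
    W.decided * usdGenerator α β decidedPotential a b u ≤ W.decided * ((a + b) - u / 2) :=
  mul_le_mul_of_nonneg_left (usdGenerator_decidedPotential_le W.fst_mem.1.le W.fst_mem.2
    W.snd_mem.1.le W.snd_mem.2 h.isCount_fst h.isCount_snd h.isCount_undecided.nonneg
    h.one_le_decided) W.decided_pos.le

lemma one_add_add_le_mul (W : PotentialWeights α β) : 1 + α + β ≤ β * W.κ := by
  linarith [W.three_le_snd, W.fst_mem.2, W.snd_mem.2]

lemma usdGenerator_opposition_le_undecided (W : PotentialWeights α β) (h : IsUnsettled N a b u) :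
    usdGenerator α β (oppositionPotential W.κ) a b u ≤ u :=
  usdGenerator_oppositionPotential_le_undecided W.fst_mem.1.le W.snd_mem.1.le
    (by linarith [W.one_le_κ]) W.one_add_add_le_mul h.isCount_fst.nonneg h.isCount_snd
    h.isCount_undecided.nonneg

lemma usdGenerator_opposition_le_mul (W : PotentialWeights α β) (h : IsUnsettled N a b u) :
    usdGenerator α β (oppositionPotential W.κ) a b u ≤ W.κ * b :=
  usdGenerator_oppositionPotential_le_opposition W.fst_mem.1.le W.snd_mem.1.le
    (by linarith [W.one_le_κ]) W.one_add_add_le_mul h.isCount_fst.nonneg h.isCount_snd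
    h.isCount_undecided.nonneg

lemma usdGenerator_opposition_le_sub (W : PotentialWeights α β) (h : IsUnsettled N a b u)
    (ha : N / 3 ≤ a) :
    usdGenerator α β (oppositionPotential W.κ) a b u ≤ u - 4 * W.decided * N := by
  have N_nonneg : 0 ≤ N := by
    linarith [h.isCount_fst.nonneg, h.isCount_snd.nonneg, h.isCount_undecided.nonneg, h.total]
  have one_add_κ_pos : 0 < 1 + W.κ := by linarith [W.one_le_κ]
  have le_div : 4 * W.decided * N ≤ a / (1 + W.κ) := by
    rw [le_div_iff₀ one_add_κ_pos]
    linarith [mul_le_mul_of_nonneg_right W.decided_le N_nonneg]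
  linarith [usdGenerator_oppositionPotential_le_sub W.fst_mem.1.le W.snd_mem.1.le W.one_le_κ
    W.one_add_add_le_mul h.isCount_fst.nonneg h.isCount_snd h.isCount_undecided.nonneg
    h.one_le_not_fst]

lemma usdGenerator_potential_le_of_undecided_le (W : PotentialWeights α β) (hr : 1 ≤ r)
    (h : IsUnsettled (r ^ 2) a b u) (hu : u ≤ W.η * r ^ 2) :
    usdGenerator α β (W.potential r) a b u ≤ -(W.decided / 8 * r ^ 2) := by
  have η_bound : W.η ≤ W.decided / 16 ∧ W.η ≤ 1 / 3 := by
    constructor <;> nlinarith [W.η_le, W.one_le_κ, W.κ_mul_η_le, W.η_pos]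
  have u_le_decided := hu.trans (mul_le_mul_of_nonneg_right η_bound.1 (sq_nonneg r))
  have u_le_third := hu.trans (mul_le_mul_of_nonneg_right η_bound.2 (sq_nonneg r))
  have opposition : usdGenerator α β (oppositionPotential W.κ) a b u +
      usdGenerator β α (oppositionPotential W.κ) b a u ≤ 2 * u - 4 * W.decided * r ^ 2 := by
    obtain ha | hb : r ^ 2 / 3 ≤ a ∨ r ^ 2 / 3 ≤ b := by
      by_contra! small
      linarith [h.total]
    · exact (add_le_add (W.usdGenerator_opposition_le_sub h ha)
        (W.swap.usdGenerator_opposition_le_undecided h.swap)).trans_eq (by ring)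
    · exact (add_le_add (W.usdGenerator_opposition_le_undecided h)
        (W.swap.usdGenerator_opposition_le_sub h.swap hb)).trans_eq
          (by rw [show W.swap.decided = W.decided from rfl]; ring)
  have decided_le : a + b - u / 2 ≤ r ^ 2 := by linarith [h.total, h.isCount_undecided.nonneg]
  rw [usdGenerator_potential]
  linarith [W.mul_usdGenerator_bias_le hr h, W.mul_usdGenerator_decided_le h,
    mul_nonneg W.decided_pos.le (sq_nonneg r),
    mul_le_mul_of_nonneg_left decided_le W.decided_pos.le]

lemma usdGenerator_potential_le_of_decided_le (W : PotentialWeights α β) (hr : 1 ≤ r)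
    (h : IsUnsettled (r ^ 2) a b u) (hab : a + b ≤ W.η * r ^ 2) :
    usdGenerator α β (W.potential r) a b u ≤ -(W.decided / 8 * r ^ 2) := by
  have η_le : W.η ≤ 1 / 6 := by nlinarith [W.η_le, W.one_le_κ, W.η_pos]
  have ab_le := hab.trans (mul_le_mul_of_nonneg_right η_le (sq_nonneg r))
  have few_opponents : W.κ * (a + b) ≤ W.decided / 16 * r ^ 2 := by
    calc W.κ * (a + b) ≤ W.κ * (W.η * r ^ 2) :=
          mul_le_mul_of_nonneg_left hab (by linarith [W.one_le_κ])
      _ = W.κ * W.η * r ^ 2 := by ring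
      _ ≤ W.decided / 16 * r ^ 2 := by gcongr; linarith [W.κ_mul_η_le]
  have decided_le : W.decided * (a + b - u / 2) ≤ W.decided * (-(r ^ 2 / 4)) :=
    mul_le_mul_of_nonneg_left (by linarith [h.total]) W.decided_pos.le
  have opposition := add_le_add (W.usdGenerator_opposition_le_mul h)
    (W.swap.usdGenerator_opposition_le_mul h.swap)
  rw [show W.swap.κ = W.κ from rfl] at opposition
  rw [usdGenerator_potential]
  linarith [W.mul_usdGenerator_bias_le hr h, W.mul_usdGenerator_decided_le h]

lemma usdGenerator_potential_le (W : PotentialWeights α β) (hr : 1 ≤ r)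
    (h : IsUnsettled (r ^ 2) a b u) :
    usdGenerator α β (W.potential r) a b u ≤ -(W.decided / 8 * r ^ 2) := by
  obtain hu | hu := le_total u (W.η * r ^ 2)
  · exact W.usdGenerator_potential_le_of_undecided_le hr h hu
  obtain hab | hab := le_total (a + b) (W.η * r ^ 2)
  · exact W.usdGenerator_potential_le_of_decided_le hr h hab
  have decided_le_one : W.decided ≤ 1 := by
    nlinarith [W.decided_le, W.one_le_κ, W.decided_pos]
  have u_le : u ≤ r ^ 2 := by linarith [h.total, h.one_le_decided]
  have decided_mul_le := mul_le_mul_of_nonneg_right decided_le_one (sq_nonneg r)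
  have decided_le : W.decided * (a + b - u / 2) ≤ W.decided * r ^ 2 :=
    mul_le_mul_of_nonneg_left (by linarith [h.total, h.isCount_undecided.nonneg]) W.decided_pos.le
  have opposition := add_le_add (W.usdGenerator_opposition_le_undecided h)
    (W.swap.usdGenerator_opposition_le_undecided h.swap)
  rw [show W.swap.κ = W.κ from rfl] at opposition
  rw [usdGenerator_potential]
  linarith [W.mul_usdGenerator_bias_le_neg hr h hu hab, W.mul_usdGenerator_decided_le h,
    sq_nonneg r]

end PotentialWeights

end Lyapunov

section LyapunovBounds

lemma half_le_log {x : ℝ} (hx : 2 ≤ x) : 1 / 2 ≤ Real.log x := by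
  have := Real.log_le_log two_pos hx
  linarith [Real.log_two_gt_d9]

lemma log_le_mul_log_of_le_mul {c N x : ℝ} (hc : 1 ≤ c) (hN : 2 ≤ N) (hx : 0 < x)
    (hxN : x ≤ c * N) : Real.log x ≤ (2 * Real.log c + 1) * Real.log N := by
  calc Real.log x ≤ Real.log (c * N) := Real.log_le_log hx hxN
    _ = Real.log c + Real.log N := Real.log_mul (by linarith) (by linarith)
    _ ≤ (2 * Real.log c + 1) * Real.log N := by
        linarith [mul_le_mul_of_nonneg_left (half_le_log hN) (Real.log_nonneg hc)]

lemma usdGenerator_add_const (α β : ℝ) (f : ℝ → ℝ → ℝ → ℝ) (B a b u : ℝ) :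
    usdGenerator α β (fun a b u => f a b u + B) a b u = usdGenerator α β f a b u := by
  simp only [usdGenerator, add_sub_add_right_eq_sub]

variable {α β r a b u : ℝ}

lemma biasPotential_mem_Icc (hα : α ∈ Set.Ioc 0 1) (hβ : β ∈ Set.Ioc 0 1) {K : ℝ} (hK : 1 ≤ K)
    (hr : 1 ≤ r) (hr2 : 2 ≤ r ^ 2) (ha : 0 ≤ a) (hb : 0 ≤ b) (hu : 0 ≤ u)
    (total : a + b + u = r ^ 2) :
    biasPotential α β K r a b u ∈ Set.Icc (-((2 * Real.log (K + 2) + 1) * Real.log (r ^ 2))) 0 := by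
  have one_le_Kr : 1 ≤ K * r := one_le_mul_of_one_le_of_one_le hK hr
  have g_nonneg := smoothAbs_nonneg r (β * a - α * b)
  have abs_le : |β * a - α * b| ≤ r ^ 2 := by
    have := mul_le_of_le_one_left ha hβ.2
    have := mul_le_of_le_one_left hb hα.2
    have := mul_nonneg hβ.1.le ha
    have := mul_nonneg hα.1.le hb
    exact abs_le.mpr ⟨by linarith, by linarith⟩
  have r_le : r ≤ r ^ 2 := le_self_pow₀ hr two_ne_zero
  have argument_le : K * r + smoothAbs r (β * a - α * b) ≤ (K + 2) * r ^ 2 := by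
    have := smoothAbs_le_abs_add (by linarith : 0 ≤ r) (β * a - α * b)
    linarith [mul_le_mul_of_nonneg_left r_le (by linarith : 0 ≤ K)]
  exact ⟨neg_le_neg (log_le_mul_log_of_le_mul (by linarith) hr2 (by linarith) argument_le),
    neg_nonpos.mpr (Real.log_nonneg (by linarith))⟩

lemma decidedPotential_mem_Icc {N : ℝ} (hu : 0 ≤ u) (total : a + b + u = N) (hab : 1 ≤ a + b) :
    decidedPotential a b u ∈ Set.Icc (-Real.log N) 0 :=
  ⟨neg_le_neg (Real.log_le_log (by linarith) (by linarith)), neg_nonpos.mpr (Real.log_nonneg hab)⟩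

lemma oppositionPotential_mem_Icc {κ N : ℝ} (hκ : 1 ≤ κ) (hN : 2 ≤ N) (hb : 0 ≤ b) (hu : 0 ≤ u)
    (total : a + b + u = N) (hab : 1 ≤ a + b) (ha : 0 ≤ a) :
    oppositionPotential κ a b u ∈ Set.Icc 0 ((2 * Real.log (1 + κ) + 1) * Real.log N) := by
  have one_le : 1 ≤ 1 + u + κ * b := by
    linarith [mul_nonneg (by linarith : 0 ≤ κ) hb]
  have le_mul : 1 + u + κ * b ≤ (1 + κ) * N := by
    rw [← total]
    nlinarith [mul_nonneg (by linarith : 0 ≤ κ) ha, mul_nonneg (by linarith : 0 ≤ κ) hu]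
  exact ⟨Real.log_nonneg one_le, log_le_mul_log_of_le_mul (by linarith) hN (by linarith) le_mul⟩

lemma exists_lyapunov (hα : α ∈ Set.Ioc 0 1) (hβ : β ∈ Set.Ioc 0 1) :
    ∃ δ M : ℝ, 0 < δ ∧ 0 < M ∧ ∀ N : ℝ, 2 ≤ N → ∃ f : ℝ → ℝ → ℝ → ℝ,
      (∀ a b u, 0 ≤ a → 0 ≤ b → 0 ≤ u → a + b + u = N → 1 ≤ a + b →
        f a b u ∈ Set.Icc 1 (M * Real.log N)) ∧
      ∀ a b u, IsUnsettled N a b u → usdGenerator α β f a b u ≤ -(δ * N) := by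
  obtain ⟨W⟩ := nonempty_potentialWeights hα.1 hα.2 hβ.1 hβ.2
  have bias_pos := W.bias_pos
  have decided_pos := W.decided_pos
  have log_K_nonneg : 0 ≤ Real.log (W.K + 2) := Real.log_nonneg (by linarith [W.one_le_K])
  have log_κ_nonneg : 0 ≤ Real.log (1 + W.κ) := Real.log_nonneg (by linarith [W.one_le_κ])
  set B := W.bias * (2 * Real.log (W.K + 2) + 1) + W.decided + 2 with hB
  refine ⟨W.decided / 8, B + 2 * (2 * Real.log (1 + W.κ) + 1), by positivity, by positivity,
    fun N hN => ?_⟩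
  obtain ⟨r, rfl⟩ : ∃ r, N = √r ^ 2 := ⟨N, (Real.sq_sqrt (by linarith)).symm⟩
  have hr : 1 ≤ √r := by nlinarith [Real.sqrt_nonneg r]
  refine ⟨fun a b u => W.potential √r a b u + B * Real.log (√r ^ 2),
    fun a b u ha hb hu total hab => ?_, fun a b u h => ?_⟩
  · obtain ⟨le_bias, bias_le⟩ :=
      biasPotential_mem_Icc hα hβ W.one_le_K hr hN ha hb hu total
    obtain ⟨le_decided, decided_le⟩ := decidedPotential_mem_Icc hu total hab
    obtain ⟨le_fst, fst_le⟩ :=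
      oppositionPotential_mem_Icc W.one_le_κ hN hb hu total hab ha
    obtain ⟨le_snd, snd_le⟩ := oppositionPotential_mem_Icc W.one_le_κ hN ha hu
      (by rwa [add_comm b a]) (by rwa [add_comm b a]) hb
    have := mul_le_mul_of_nonneg_left le_bias bias_pos.le
    have := mul_le_mul_of_nonneg_left bias_le bias_pos.le
    have := mul_le_mul_of_nonneg_left le_decided decided_pos.le
    have := mul_le_mul_of_nonneg_left decided_le decided_pos.le
    have := half_le_log hN
    constructor <;> simp only [PotentialWeights.potential, hB] <;> linarith
  · rw [usdGenerator_add_const]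
    exact W.usdGenerator_potential_le hr h

end LyapunovBounds

section UndecidedStateDynamics

/-- The configurations that `USD_p` can reach from `c` in one step. -/
def usdNeighbors (c : ℕ × ℕ × ℕ) : Finset (ℕ × ℕ × ℕ) :=
  {(c.1 - 1, c.2.1, c.2.2 + 1), (c.1, c.2.1 - 1, c.2.2 + 1), (c.1 + 1, c.2.1, c.2.2 - 1),
    (c.1, c.2.1 + 1, c.2.2 - 1), c}

variable {n : ℕ} {p : ℝ} {c d : ℕ × ℕ × ℕ}

lemma eq_or_of_usdStep_ne_zero (h : usdStep n p c d ≠ 0) :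
    d = c ∨
      0 < c.1 ∧ 0 < c.2.1 ∧
        (d = (c.1 - 1, c.2.1, c.2.2 + 1) ∨ d = (c.1, c.2.1 - 1, c.2.2 + 1)) ∨
      0 < c.2.2 ∧ (0 < c.1 ∧ d = (c.1 + 1, c.2.1, c.2.2 - 1) ∨
        0 < c.2.1 ∧ d = (c.1, c.2.1 + 1, c.2.2 - 1)) := by
  obtain ⟨a, b, u⟩ := c
  contrapose! h
  rcases a with _ | a <;> rcases b with _ | b <;> rcases u with _ | u <;> simp_all [usdStep]

lemma mem_usdNeighbors_of_usdStep_ne_zero (h : usdStep n p c d ≠ 0) : d ∈ usdNeighbors c := by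
  simp only [usdNeighbors, Finset.mem_insert, Finset.mem_singleton]
  have := eq_or_of_usdStep_ne_zero h
  tauto

/-- The configurations of `n` agents, at least one of them decided. -/
def usdLive (n : ℕ) : Set (ℕ × ℕ × ℕ) := {c | c.1 + c.2.1 + c.2.2 = n ∧ 0 < c.1 + c.2.1}

lemma mem_usdLive_of_usdStep_ne_zero (hc : c ∈ usdLive n) (h : usdStep n p c d ≠ 0) :
    d ∈ usdLive n := by
  obtain ⟨total, decided⟩ := hc
  obtain rfl | ⟨_, _, rfl | rfl⟩ | ⟨_, ⟨_, rfl⟩ | ⟨_, rfl⟩⟩ := eq_or_of_usdStep_ne_zero h <;>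
    simp only [usdLive, Set.mem_ofPred_eq] <;> lia

lemma isUnsettled_of_mem_usdLive (hc : c ∈ usdLive n) (h : ¬(c.1 = n ∨ c.2.1 = n)) :
    IsUnsettled n c.1 c.2.1 c.2.2 := by
  obtain ⟨total, decided⟩ := hc
  exact ⟨isCount_natCast _, isCount_natCast _, isCount_natCast _, mod_cast total,
    mod_cast decided, mod_cast (by lia : 1 ≤ c.2.1 + c.2.2), mod_cast (by lia : 1 ≤ c.1 + c.2.2)⟩

lemma natCast_mul_apply_pred (m : ℕ) (g : ℝ → ℝ) :
    (m : ℝ) * g ((m - 1 : ℕ) : ℝ) = m * g (m - 1) := by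
  obtain _ | m := m <;> simp

lemma sum_usdStep_mul (n : ℕ) (p : ℝ) (c : ℕ × ℕ × ℕ) (f : ℝ → ℝ → ℝ → ℝ) :
    ∑ d ∈ usdNeighbors c, usdStep n p c d * f d.1 d.2.1 d.2.2 =
      f c.1 c.2.1 c.2.2 + usdGenerator (1 - p) 1 f c.1 c.2.1 c.2.2 / n ^ 2 := by
  have lose_fst := natCast_mul_apply_pred c.1 fun a => f a c.2.1 (c.2.2 + 1)
  have lose_snd := natCast_mul_apply_pred c.2.1 fun b => f c.1 b (c.2.2 + 1)
  have gain_fst := natCast_mul_apply_pred c.2.2 fun u => f (c.1 + 1) c.2.1 u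
  have gain_snd := natCast_mul_apply_pred c.2.2 fun u => f c.1 (c.2.1 + 1) u
  simp only [usdStep, add_mul, ite_mul, zero_mul, Finset.sum_add_distrib, Finset.sum_ite_eq',
    usdNeighbors, Finset.mem_insert, Finset.mem_singleton, true_or, or_true, if_true,
    Nat.cast_add, Nat.cast_one, usdGenerator]
  linear_combination (1 - p) * c.2.1 / n ^ 2 * lose_fst + c.1 / n ^ 2 * lose_snd +
    c.1 / n ^ 2 * gain_fst + c.2.1 / n ^ 2 * gain_snd

end UndecidedStateDynamics

lemma exists_mul_log_mul_exp_le {δ M : ℝ} (hδ : 0 < δ) (hM : 0 < M) :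
    ∃ C : ℝ, 0 < C ∧ ∀ x : ℝ, 2 ≤ x →
      M * Real.log x * Real.exp (-(δ / x / (M * Real.log x) * (C * x * Real.log x ^ 2 - 1))) ≤
        C * x⁻¹ := by
  refine ⟨2 * M / δ + M * Real.exp (δ / M), by positivity, fun x hx => ?_⟩
  set C := 2 * M / δ + M * Real.exp (δ / M)
  have log_ge := half_le_log hx
  have x_pos : 0 < x := by linarith
  have exponent_le : -(δ / x / (M * Real.log x) * (C * x * Real.log x ^ 2 - 1)) ≤
      δ / M - 2 * Real.log x := by
    have main_term : 2 * Real.log x ≤ δ * C / M * Real.log x := by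
      gcongr
      rw [le_div_iff₀ hM, mul_add, mul_div_cancel₀ _ hδ.ne']
      have := Real.exp_pos (δ / M)
      nlinarith [mul_pos hδ (mul_pos hM this)]
    have error_term : δ / M / (x * Real.log x) ≤ δ / M :=
      div_le_self (by positivity) (by nlinarith)
    have expand : -(δ / x / (M * Real.log x) * (C * x * Real.log x ^ 2 - 1)) =
        δ / M / (x * Real.log x) - δ * C / M * Real.log x := by
      field_simp
      ring
    linarith
  calc M * Real.log x * Real.exp (-(δ / x / (M * Real.log x) * (C * x * Real.log x ^ 2 - 1)))
      ≤ M * x * Real.exp (δ / M - 2 * Real.log x) := by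
        gcongr
        exact Real.log_le_self x_pos.le
    _ = M * Real.exp (δ / M) * x⁻¹ := by
        rw [Real.exp_sub, two_mul, Real.exp_add, Real.exp_log x_pos]
        field_simp
    _ ≤ C * x⁻¹ := by
        gcongr
        exact le_add_of_nonneg_left (by positivity)

lemma lt_one_of_abs_sub_le {ε p x₁ x₂ N : ℝ} (hε : 0 < ε) (hN : 0 < N) (hx₁ : ε * N ≤ x₁)
    (hx₂ : 0 < x₂) (hx₂N : x₂ ≤ N) (h : |p - (1 - x₁ / x₂)| ≤ ε / 2 * √(Real.log N / N)) :
    p < 1 := by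
  have sqrt_le : √(Real.log N / N) ≤ 1 :=
    Real.sqrt_le_one.mpr ((div_le_one hN).mpr (Real.log_le_self hN.le))
  have ε_le : ε ≤ x₁ / x₂ :=
    (le_div_iff₀ hx₂).mpr ((mul_le_mul_of_nonneg_left hx₂N hε.le).trans hx₁)
  linarith [le_of_abs_le h, mul_le_of_le_one_right (half_pos hε).le sqrt_le]

theorem stmt_2_general (p : ℝ) (hp : p ∈ Set.Ico (0 : ℝ) 1) :
    ∃ C : ℝ, 0 < C ∧ ∀ n : ℕ, 2 ≤ n →
      ∀ x0 : ℕ × ℕ × ℕ, x0.1 + x0.2.1 + x0.2.2 = n → 0 < x0.1 + x0.2.1 →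
        ∀ μ : Measure (ℕ → ℕ × ℕ × ℕ), IsUSD n p x0 μ →
          1 - C * (n : ℝ)⁻¹ ≤
            (μ {ω | ∃ t : ℕ, (t : ℝ) ≤ C * n * (Real.log n) ^ 2 ∧
                  ((ω t).1 = n ∨ (ω t).2.1 = n)}).toReal := by
  obtain ⟨δ, M, hδ, hM, lyapunov⟩ :=
    exists_lyapunov (α := 1 - p) (β := 1) ⟨by linarith [hp.2], by linarith [hp.1]⟩ ⟨one_pos, le_rfl⟩
  obtain ⟨C, hC, error_le⟩ := exists_mul_log_mul_exp_le hδ hM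
  refine ⟨C, hC, fun n hn x0 total decided μ hμ => ?_⟩
  have two_le : (2 : ℝ) ≤ n := by exact_mod_cast hn
  obtain ⟨f, f_mem, generator_le⟩ := lyapunov n two_le
  have drift (c) (hc : c ∈ usdLive n) (hA : c ∈ {c : ℕ × ℕ × ℕ | ¬(c.1 = n ∨ c.2.1 = n)}) :
      ∑ d ∈ usdNeighbors c, usdStep n p c d * f d.1 d.2.1 d.2.2 ≤
        f c.1 c.2.1 c.2.2 - δ / n := by
    rw [sum_usdStep_mul]
    have := div_le_div_of_nonneg_right
      (generator_le _ _ _ (isUnsettled_of_mem_usdLive hc hA)) (sq_nonneg (n : ℝ))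
    have : -(δ * n) / (n : ℝ) ^ 2 = -(δ / n) := by field_simp
    linarith
  have exit := IsMarkovLaw.one_sub_le_measureReal_exit_of_additive_drift (I := usdLive n)
    (τ := C * n * Real.log n ^ 2) hμ (fun _ _ => mem_usdNeighbors_of_usdStep_ne_zero)
    (fun _ hc _ => mem_usdLive_of_usdStep_ne_zero hc) (by positivity : 0 ≤ δ / n)
    (fun c hc => f_mem _ _ _ (by positivity) (by positivity) (by positivity)
      (mod_cast hc.1) (mod_cast hc.2)) drift ⟨total, decided⟩ (by positivity)
  simp only [Set.mem_ofPred_eq, not_not] at exit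
  exact (sub_le_sub_left (error_le n two_le) 1).trans exit

/-- For constants `ε, p ∈ (0,1]`, there are constants `c, C > 0`
(depending only on `ε` and `p`) such that for any configuration `x0 = (x₁, x₂, u)` with
`x₁ ∈ [ε·n, x₂]`, `u ≤ n/2` and `|p - p_s| ≤ c·√(log n / n)` where `p_s = 1 - x₁/x₂`,
the chain `USD_p` started from `x0` reaches consensus (`X₁ = n` or `X₂ = n`) within
`C·n·log² n` steps with probability at least `1 - C·n⁻¹`. -/
theorem stmt_2 (ε p : ℝ) (hε : ε ∈ Set.Ioc (0 : ℝ) 1) (hp : p ∈ Set.Ioc (0 : ℝ) 1) :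
    ∃ c C : ℝ, 0 < c ∧ 0 < C ∧
      ∀ (n : ℕ), 2 ≤ n →
      ∀ x0 : ℕ × ℕ × ℕ, x0.1 + x0.2.1 + x0.2.2 = n →
        ε * (n : ℝ) ≤ (x0.1 : ℝ) → x0.1 ≤ x0.2.1 → (x0.2.2 : ℝ) ≤ (n : ℝ) / 2 →
        |p - (1 - (x0.1 : ℝ) / (x0.2.1 : ℝ))| ≤ c * Real.sqrt (Real.log n / n) →
        ∀ μ : Measure (ℕ → ℕ × ℕ × ℕ), IsUSD n p x0 μ →
          1 - C * (n : ℝ)⁻¹ ≤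
            (μ {ω | ∃ t : ℕ, (t : ℝ) ≤ C * n * (Real.log n) ^ 2 ∧
                  ((ω t).1 = n ∨ (ω t).2.1 = n)}).toReal := by
  by_cases hp1 : p < 1
  · obtain ⟨C, hC, consensus⟩ := stmt_2_general p ⟨hp.1.le, hp1⟩
    refine ⟨1, C, one_pos, hC, fun n hn x0 total hx _ _ _ => consensus n hn x0 total ?_⟩
    have : (0 : ℝ) < x0.1 := (mul_pos hε.1 (by positivity)).trans_le hx
    exact Nat.add_pos_left (mod_cast this) _
  · refine ⟨ε / 2, 1, half_pos hε.1, one_pos, fun n hn x0 total hx hle _ hp_sub => ?_⟩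
    have n_pos : (0 : ℝ) < n := by positivity
    have x₁_pos : (0 : ℝ) < x0.1 := (mul_pos hε.1 n_pos).trans_le hx
    exact absurd (lt_one_of_abs_sub_le hε.1 n_pos hx (x₁_pos.trans_le (mod_cast hle))
      (mod_cast (by lia : x0.2.1 ≤ n)) hp_sub) hp1
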